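/- arXiv:1303.3767 — 4 statements merged into one kernel-verified Lean document; each statement's English description precedes it below -/
import Mathlib

section
/- Let N ≥ 1 and let x ∈ S_N. Then x contains the pattern [231] (the permutation σ ∈ S_3 with σ(1)=2, σ(2)=3, σ(3)=1) if and only if x factorizes over [231]. (Note ℓ([231]) = 2; this is the statement that x contains [231] if and only if x has an unmatched ascent.) -/
/-!
A factorization `x = z ∘ σ' ∘ y` exhibits the pattern at the three positions `y⁻¹` of the window;
length additivity plays no role there.

Conversely, an occurrence `x(i₃) < x(i₁) < x(i₂)`, `i₁ < i₂ < i₃`, is made contiguous by swapping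
adjacent descents (`exists_contiguous`), by induction on the span `i₃ - i₁`.
If the entry just after `i₁` is smaller than `x(i₁)`, swap it with `x(i₁)`; otherwise it can take
the role of `x(i₂)`, so `i₂ = i₁ + 1` may be assumed. Then, if the entry just before `i₃` is smaller
than `x(i₁)`, it can take the role of `x(i₃)`; otherwise swap it with `x(i₃)`. Each step shrinks the
span. The product of these swaps is `y`: each swap changes the length by exactly one (`len_mul_swap`),
and since every inversion of `y` is an inversion of `x`, the lengths add up. What remains is a
permutation `w` with `231` at three consecutive positions, and sorting them by two further adjacent
swaps gives `z`.
-/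

/-- Coxeter length of a permutation of `Fin N`: its number of inversions. -/
def len {N : ℕ} (x : Equiv.Perm (Fin N)) : ℕ :=
  (Finset.univ.filter fun p : Fin N × Fin N => p.1 < p.2 ∧ x p.2 < x p.1).card

/-- `x` contains the pattern `σ`. -/
def Contains {N K : ℕ} (x : Equiv.Perm (Fin N)) (σ : Equiv.Perm (Fin K)) : Prop :=
  ∃ f : Fin K → Fin N, StrictMono f ∧ ∀ a b : Fin K, x (f a) < x (f b) ↔ σ a < σ b

/-- `x` factorizes over the pattern `σ`: there is a shift `σ'` of `σ` by `j` and a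
length-additive factorization `x = z ∘ σ' ∘ y` with `y⁻¹` increasing on the window
`{j+1,…,j+k}` and `z` increasing on the window. -/
def FactorizesOver {N K : ℕ} (x : Equiv.Perm (Fin N)) (σ : Equiv.Perm (Fin K)) : Prop :=
  ∃ (j : ℕ) (hj : j + K ≤ N) (σ' y z : Equiv.Perm (Fin N)),
    (∀ t : Fin K, (σ' ⟨j + t.val, by have := t.isLt; omega⟩).val = j + (σ t).val) ∧
    (∀ m : Fin N, (m.val < j ∨ j + K ≤ m.val) → σ' m = m) ∧
    x = z * σ' * y ∧
    len x = len y + len σ + len z ∧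
    (∀ a b : Fin K, a < b →
      y⁻¹ ⟨j + a.val, by have := a.isLt; omega⟩ < y⁻¹ ⟨j + b.val, by have := b.isLt; omega⟩) ∧
    (∀ a b : Fin K, a < b →
      z ⟨j + a.val, by have := a.isLt; omega⟩ < z ⟨j + b.val, by have := b.isLt; omega⟩)


/-- The pattern [231]. -/
def p231 : Equiv.Perm (Fin 3) := ⟨![1, 2, 0], ![2, 0, 1], by decide, by decide⟩

/-- Off the pair `{k, k + 1}`, the adjacent transposition preserves the order of two points. -/
lemma swap_lt_swap_iff {N : ℕ} {k l a b : Fin N} (hkl : l.val = k.val + 1)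
    (h₁ : ¬(a = k ∧ b = l)) (h₂ : ¬(a = l ∧ b = k)) :
    Equiv.swap k l a < Equiv.swap k l b ↔ a < b := by
  simp only [Equiv.swap_apply_def]
  simp only [Fin.ext_iff] at h₁ h₂
  split_ifs <;> simp only [Fin.ext_iff, Fin.lt_def] at * <;> omega

/-- Exchanging the entries of an adjacent ascent creates exactly one inversion. -/
lemma len_mul_swap {N : ℕ} (x : Equiv.Perm (Fin N)) {k l : Fin N} (hkl : l.val = k.val + 1)
    (hx : x k < x l) : len (x * Equiv.swap k l) = len x + 1 := by
  classical
  have hlt : k < l := by rw [Fin.lt_def]; omega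
  -- The new inversions are `(k, l)` and the transposed images of the old ones.
  have key : (Finset.univ.filter fun p : Fin N × Fin N =>
        p.1 < p.2 ∧ (x * Equiv.swap k l) p.2 < (x * Equiv.swap k l) p.1) =
      insert (k, l) ((Finset.univ.filter fun p : Fin N × Fin N => p.1 < p.2 ∧ x p.2 < x p.1).map
        ((Equiv.swap k l).prodCongr (Equiv.swap k l)).toEmbedding) := by
    ext ⟨a, b⟩
    simp only [Finset.mem_insert, Finset.mem_map_equiv, Finset.mem_filter, Finset.mem_univ,
      true_and]
    simp only [Equiv.Perm.coe_mul, Function.comp_apply, Prod.mk.injEq, Equiv.prodCongr_symm,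
      Equiv.prodCongr_apply, Equiv.symm_swap, Prod.map_apply]
    by_cases h₁ : a = k ∧ b = l
    · obtain ⟨rfl, rfl⟩ := h₁
      simp [hlt, hx]
    by_cases h₂ : a = l ∧ b = k
    · obtain ⟨rfl, rfl⟩ := h₂
      simp [hlt.not_gt, hx.not_gt, hlt.ne']
    rw [swap_lt_swap_iff hkl h₁ h₂]
    tauto
  unfold len
  rw [key, Finset.card_insert_of_notMem, Finset.card_map]
  simp [Finset.mem_map_equiv, hlt.not_gt]

/-- `x = w ∘ y` length-additively, where the consecutive positions `p, q, r` carry the pattern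
`231` in `w`, and the corresponding positions of `x` are in the same order and lie in `[i, m]`.
Length additivity is accompanied by the fact that inversions of `y` are inversions of `x`. -/
def Contiguous {N : ℕ} (x : Equiv.Perm (Fin N)) (i m : Fin N) : Prop :=
  ∃ (p q r : Fin N) (y w : Equiv.Perm (Fin N)), q.val = p.val + 1 ∧ r.val = p.val + 2 ∧
    x = w * y ∧ len x = len w + len y ∧ (∀ a b, a < b → y b < y a → x b < x a) ∧
    i ≤ y⁻¹ p ∧ y⁻¹ p < y⁻¹ q ∧ y⁻¹ q < y⁻¹ r ∧ y⁻¹ r ≤ m ∧ w r < w p ∧ w p < w q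

lemma Contiguous.mono {N : ℕ} {x : Equiv.Perm (Fin N)} {i i' m m' : Fin N}
    (h : Contiguous x i m) (hi : i' ≤ i) (hm : m ≤ m') : Contiguous x i' m' := by
  obtain ⟨p, q, r, y, w, h1, h2, h3, h4, h5, h6, h7, h8, h9, h10⟩ := h
  exact ⟨p, q, r, y, w, h1, h2, h3, h4, h5, hi.trans h6, h7, h8, h9.trans hm, h10⟩

/-- Undoing one swap. The interval `[i, m]` must miss `k` or `l`, for otherwise the swap could
reverse two of the three window positions. -/
lemma Contiguous.of_swap {N : ℕ} {x : Equiv.Perm (Fin N)} {i m i' m' k l : Fin N}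
    (hkl : l.val = k.val + 1) (hx : x l < x k) (h : Contiguous (x * Equiv.swap k l) i m)
    (hkl' : k < i ∨ m < l) (hi : ∀ a, i ≤ a → a ≤ m → i' ≤ Equiv.swap k l a)
    (hm : ∀ a, i ≤ a → a ≤ m → Equiv.swap k l a ≤ m') : Contiguous x i' m' := by
  obtain ⟨p, q, r, y, w, h1, h2, h3, h4, h5, h6, h7, h8, h9, h10⟩ := h
  have hlt : k < l := by rw [Fin.lt_def]; omega
  have hy : y k < y l := by
    by_contra hc
    have hc' : y l < y k := lt_of_le_of_ne (not_lt.1 hc) (fun e => hlt.ne' (y.injective e))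
    have := h5 k l hlt hc'
    simp at this
    exact this.not_gt hx
  have hx' : x = w * (y * Equiv.swap k l) := by
    rw [← mul_assoc, ← h3, mul_assoc, Equiv.swap_mul_self, mul_one]
  have hlx : len x = len (x * Equiv.swap k l) + 1 := by
    have := len_mul_swap (x * Equiv.swap k l) hkl (by simpa using hx)
    rwa [mul_assoc, Equiv.swap_mul_self, mul_one] at this
  have hinv : ∀ a, (y * Equiv.swap k l)⁻¹ a = Equiv.swap k l (y⁻¹ a) := by
    intro a; simp [mul_inv_rev]
  have hord : ∀ a b, i ≤ a → b ≤ m → a < b → Equiv.swap k l a < Equiv.swap k l b := by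
    intro a b ha hb hab
    rw [swap_lt_swap_iff hkl]
    · exact hab
    · rintro ⟨rfl, rfl⟩
      rcases hkl' with h | h
      · exact ha.not_gt h
      · exact hb.not_gt h
    · rintro ⟨rfl, rfl⟩
      exact hlt.not_gt hab
  refine ⟨p, q, r, y * Equiv.swap k l, w, h1, h2, hx', ?_, ?_, ?_, ?_, ?_, ?_, h10⟩
  · rw [len_mul_swap y hkl hy, hlx, h4]; omega
  · intro a b hab hyab
    by_cases h₁ : a = k ∧ b = l
    · rw [h₁.1, h₁.2]; exact hx
    by_cases h₂ : a = l ∧ b = k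
    · rw [h₂.1, h₂.2] at hab; exact absurd hab hlt.not_gt
    simpa using h5 _ _ ((swap_lt_swap_iff hkl h₁ h₂).2 hab) hyab
  · rw [hinv]; exact hi _ h6 ((h7.trans h8).le.trans h9)
  · rw [hinv, hinv]; exact hord _ _ h6 (h8.le.trans h9) h7
  · rw [hinv, hinv]; exact hord _ _ (h6.trans h7.le) h9 h8
  · rw [hinv]; exact hm _ (h6.trans (h7.trans h8).le) h9

/-- An occurrence of `231` within positions `i < j < m` can be made contiguous by adjacent swaps
of descents. -/
lemma exists_contiguous {N : ℕ} (n : ℕ) : ∀ (x : Equiv.Perm (Fin N)) (i j m : Fin N),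
    i < j → j < m → x m < x i → x i < x j → m.val - i.val ≤ n → Contiguous x i m := by
  induction n with
  | zero =>
    intro x i j m hij hjm _ _ hn
    simp only [Fin.lt_def] at hij hjm
    omega
  | succ n ih =>
    intro x i j m hij hjm hmi hxij hn
    have hij' := Fin.lt_def.1 hij
    have hjm' := Fin.lt_def.1 hjm
    -- `i'` and `m'` are the positions just after `i` and just before `m`.
    obtain ⟨i', hi'⟩ : ∃ i' : Fin N, i'.val = i.val + 1 :=
      ⟨⟨i.val + 1, by have := m.isLt; omega⟩, rfl⟩
    obtain ⟨m', hm'⟩ : ∃ m' : Fin N, m.val = m'.val + 1 :=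
      ⟨⟨m.val - 1, by have := m.isLt; omega⟩, by simp only; omega⟩
    rcases lt_or_ge (x i') (x i) with hd | hd
    · -- The entry at `i'` is below `x i`: swap them.
      have hji' : j ≠ i' := by rintro rfl; exact hd.not_gt hxij
      have hji : j.val ≠ i'.val := fun e => hji' (Fin.ext e)
      have s1 : Equiv.swap i i' j = j := Equiv.swap_apply_of_ne_of_ne hij.ne' hji'
      have s2 : Equiv.swap i i' m = m := Equiv.swap_apply_of_ne_of_ne
        (by rw [Ne, Fin.ext_iff]; omega) (by rw [Ne, Fin.ext_iff]; omega)
      refine Contiguous.of_swap hi' hd (ih (x * Equiv.swap i i') i' j m (by rw [Fin.lt_def]; omega)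
        hjm (by simpa [s2] using hmi) (by simpa [s1] using hxij) (by omega))
        (Or.inl (by rw [Fin.lt_def]; omega)) ?_ ?_ <;>
      · intro a h1 h2
        rw [Equiv.swap_apply_def]
        split_ifs <;> simp only [Fin.ext_iff, Fin.le_def] at * <;> omega
    · have hd' : x i < x i' := lt_of_le_of_ne hd
        (fun e => by have := congrArg Fin.val (x.injective e); omega)
      by_cases hm2 : m.val = i.val + 2
      · refine ⟨i, i', m, 1, x, hi', hm2, by simp, ?_, ?_, le_rfl, ?_, ?_, le_rfl, hmi, hd'⟩
        · have : len (1 : Equiv.Perm (Fin N)) = 0 := by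
            simp only [len, Finset.card_eq_zero, Finset.filter_eq_empty_iff]
            rintro ⟨a, b⟩ - ⟨h1, h2⟩
            exact h1.not_gt h2
          omega
        · intro a b h1 h2
          exact absurd h2 h1.not_gt
        · simp only [inv_one, Equiv.Perm.one_apply, Fin.lt_def]; omega
        · simp only [inv_one, Equiv.Perm.one_apply, Fin.lt_def]; omega
      rcases lt_or_ge (x m') (x i) with hf | hf
      · -- The entry at `m'` can replace the one at `m`.
        have him' : i' ≠ m' := by rintro rfl; exact hf.not_gt hd'
        have him : i'.val ≠ m'.val := fun e => him' (Fin.ext e)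
        exact (ih x i i' m' (by rw [Fin.lt_def]; omega) (by rw [Fin.lt_def]; omega) hf hd'
          (by omega)).mono le_rfl (by rw [Fin.le_def]; omega)
      · -- The entry at `m'` is above `x m`: swap them, keeping `i, i + 1` as the ascent; if
        -- `i + 1` were `m'` the occurrence would already be contiguous.
        have s1 : Equiv.swap m' m i = i := Equiv.swap_apply_of_ne_of_ne
          (by rw [Ne, Fin.ext_iff]; omega) (by rw [Ne, Fin.ext_iff]; omega)
        have s2 : Equiv.swap m' m i' = i' := Equiv.swap_apply_of_ne_of_ne
          (by rw [Ne, Fin.ext_iff]; omega) (by rw [Ne, Fin.ext_iff]; omega)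
        refine Contiguous.of_swap hm' (hmi.trans_le hf) (ih (x * Equiv.swap m' m) i i' m'
          (by rw [Fin.lt_def]; omega) (by rw [Fin.lt_def]; omega)
          (by simpa [s1] using hmi) (by simpa [s1, s2] using hd') (by omega))
          (Or.inr (by rw [Fin.lt_def]; omega)) ?_ ?_ <;>
        · intro a h1 h2
          rw [Equiv.swap_apply_def]
          split_ifs <;> simp only [Fin.ext_iff, Fin.le_def] at * <;> omega

lemma len_p231 : len p231 = 2 := by decide

/-- The shifted `231` is the product of the two adjacent transpositions of the window. -/
lemma Contiguous.factorizesOver {N : ℕ} {x : Equiv.Perm (Fin N)} {i m : Fin N}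
    (h : Contiguous x i m) : FactorizesOver x p231 := by
  obtain ⟨p, q, r, y, w, h1, h2, h3, h4, -, -, h7, h8, -, h10, h11⟩ := h
  have hr := r.isLt
  have hpq : p ≠ q := by rw [Ne, Fin.ext_iff]; omega
  have hpr : p ≠ r := by rw [Ne, Fin.ext_iff]; omega
  have hqr : q ≠ r := by rw [Ne, Fin.ext_iff]; omega
  have e0 : ∀ hh, (⟨p.val + 0, hh⟩ : Fin N) = p := fun _ => rfl
  have e1 : ∀ hh, (⟨p.val + 1, hh⟩ : Fin N) = q := fun _ => Fin.ext h1.symm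
  have e2 : ∀ hh, (⟨p.val + 2, hh⟩ : Fin N) = r := fun _ => Fin.ext h2.symm
  set z := w * Equiv.swap q r * Equiv.swap p q with hz
  have zp : z p = w r := by simp [hz]
  have zq : z q = w p := by simp [hz, Equiv.swap_apply_of_ne_of_ne hpq hpr]
  have zr : z r = w q := by simp [hz, Equiv.swap_apply_of_ne_of_ne hpr.symm hqr.symm]
  have hw : w = z * (Equiv.swap p q * Equiv.swap q r) := by
    rw [hz]; simp [mul_assoc]
  have hlen : len w = len z + 2 := by
    rw [hw, ← mul_assoc, len_mul_swap _ (by omega), len_mul_swap _ h1]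
    · rw [zp, zq]; exact h10
    · simpa [Equiv.swap_apply_of_ne_of_ne hpr.symm hqr.symm, zp, zr] using h10.trans h11
  refine ⟨p.val, by omega, Equiv.swap p q * Equiv.swap q r, y, z, ?_, ?_, ?_, ?_, ?_, ?_⟩
  · intro t
    fin_cases t
    · simp [p231, Equiv.swap_apply_of_ne_of_ne hpq hpr, h1]
    · simp [p231, e1, Equiv.swap_apply_of_ne_of_ne hpr.symm hqr.symm, h2]
    · simp [p231, e2]
  · intro a ha
    have a1 : a ≠ p := by rw [Ne, Fin.ext_iff]; omega
    have a2 : a ≠ q := by rw [Ne, Fin.ext_iff]; omega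
    have a3 : a ≠ r := by rw [Ne, Fin.ext_iff]; omega
    simp [Equiv.swap_apply_of_ne_of_ne, a1, a2, a3]
  · rw [h3, hw]
  · rw [h4, hlen, len_p231]; omega
  · intro a b hab
    fin_cases a <;> fin_cases b <;> simp only [e0, e1, e2]
      <;> first
      | exact h7
      | exact h8
      | exact h7.trans h8
      | exact absurd hab (by decide)
  · have u : z p < z q := by rw [zp, zq]; exact h10
    have v : z q < z r := by rw [zq, zr]; exact h11
    intro a b hab
    fin_cases a <;> fin_cases b <;> simp only [e0, e1, e2]
      <;> first
      | exact u
      | exact v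
      | exact u.trans v
      | exact absurd hab (by decide)

theorem stmt1 (N : ℕ) (hN : 1 ≤ N) (x : Equiv.Perm (Fin N)) :
    Contains x p231 ↔ FactorizesOver x p231 := by
  constructor
  · rintro ⟨f, hf, h⟩
    exact (exists_contiguous _ x (f 0) (f 1) (f 2) (hf (by decide)) (hf (by decide))
      ((h 2 0).2 (by decide)) ((h 0 1).2 (by decide)) le_rfl).factorizesOver
  · rintro ⟨j, hj, σ', y, z, h1, -, rfl, -, h5, h6⟩
    refine ⟨fun t => y⁻¹ ⟨j + t.val, by have := t.isLt; omega⟩, fun a b hab => h5 a b hab, ?_⟩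
    have hz : StrictMono fun t : Fin 3 => z ⟨j + t.val, by have := t.isLt; omega⟩ :=
      fun a b hab => h6 a b hab
    have hσ : ∀ t : Fin 3, σ' ⟨j + t.val, by have := t.isLt; omega⟩ =
        ⟨j + (p231 t).val, by have := (p231 t).isLt; omega⟩ := fun t => Fin.ext (h1 t)
    intro a b
    simp only [Equiv.Perm.coe_mul, Function.comp_apply, Equiv.Perm.inv_def, Equiv.apply_symm_apply, hσ]
    exact hz.lt_iff_lt (a := p231 a) (b := p231 b)
end

section
/- Let N ≥ 1, let x ∈ S_N, and let σ be one of the patterns [132] or [213] in S_3. Then x contains σ if and only if x factorizes over σ. (Note ℓ([132]) = ℓ([213]) = 1.) -/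
/-- The pattern [132]. -/
def p132 : Equiv.Perm (Fin 3) := ⟨![0, 2, 1], ![0, 2, 1], by decide, by decide⟩

/-- The pattern [213]. -/
def p213 : Equiv.Perm (Fin 3) := ⟨![1, 0, 2], ![1, 0, 2], by decide, by decide⟩

/-! ### Inversions and additivity of length -/

/-- The set of inversions counted by `len`. -/
def invSet {N : ℕ} (x : Equiv.Perm (Fin N)) : Finset (Fin N × Fin N) :=
  Finset.univ.filter fun p : Fin N × Fin N => p.1 < p.2 ∧ x p.2 < x p.1

lemma mem_invSet {N : ℕ} (x : Equiv.Perm (Fin N)) (i i' : Fin N) :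
    (i, i') ∈ invSet x ↔ i < i' ∧ x i' < x i := by
  simp [invSet]

/-- Additivity of length, when `y` inverts only pairs inverted by `x`, the occurrence `f` occupies
the window of `y` starting at `j`, and `w` differs from `y` by permuting that window by `σ`.  The
inversions of `x` are those of `y`, those inside the occurrence (counted by `σ`), and those created
by `z = x * w⁻¹`. -/
lemma len_add {N K : ℕ} (x y w : Equiv.Perm (Fin N)) (σ : Equiv.Perm (Fin K))
    (f : Fin K → Fin N) (hf : StrictMono f)
    (hpat : ∀ a b : Fin K, x (f a) < x (f b) ↔ σ a < σ b) (j : ℕ)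
    (hy : ∀ t, (y (f t)).val = j + t.val)
    (hw : ∀ t, (w (f t)).val = j + (σ t).val)
    (hw' : ∀ i, i ∉ Set.range f → w i = y i)
    (hout : ∀ i, i ∉ Set.range f → (y i).val < j ∨ j + K ≤ (y i).val)
    (hext : ∀ i i', i < i' → x i < x i' → y i < y i') :
    len x = len y + len σ + len (x * w⁻¹) := by
  classical
  -- `w` and `y` order a pair of positions in the same way unless both lie in the occurrence.
  have hcmp : ∀ i i', ¬ (i ∈ Set.range f ∧ i' ∈ Set.range f) → (w i < w i' ↔ y i < y i') := by
    intro i i' h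
    by_cases hi : i ∈ Set.range f <;> by_cases hi' : i' ∈ Set.range f
    · exact absurd ⟨hi, hi'⟩ h
    · obtain ⟨t, rfl⟩ := hi
      have h1 := hy t; have h2 := hw t; have h3 := hw' i' hi'; have h4 := hout i' hi'
      have h5 := t.isLt; have h6 := (σ t).isLt
      rw [h3, Fin.lt_def, Fin.lt_def]; omega
    · obtain ⟨t, rfl⟩ := hi'
      have h1 := hy t; have h2 := hw t; have h3 := hw' i hi; have h4 := hout i hi
      have h5 := t.isLt; have h6 := (σ t).isLt
      rw [h3, Fin.lt_def, Fin.lt_def]; omega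
    · rw [hw' i hi, hw' i' hi']
  have hyf : ∀ s t, y (f s) < y (f t) ↔ s < t := by
    intro s t; rw [Fin.lt_def, Fin.lt_def, hy, hy]; omega
  have hwf : ∀ s t, w (f s) < w (f t) ↔ σ s < σ t := by
    intro s t; rw [Fin.lt_def, Fin.lt_def, hw, hw]; omega
  have hS : ∀ i i', (i, i') ∈ (invSet σ).image (Prod.map f f) ↔
      (∃ s t, i = f s ∧ i' = f t ∧ s < t ∧ σ t < σ s) := by
    intro i i'
    simp only [Finset.mem_image, Prod.exists, mem_invSet, Prod.map_apply, Prod.mk.injEq]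
    constructor
    · rintro ⟨s, t, ⟨h1, h2⟩, h3, h4⟩; exact ⟨s, t, h3.symm, h4.symm, h1, h2⟩
    · rintro ⟨s, t, h3, h4, h1, h2⟩; exact ⟨s, t, ⟨h1, h2⟩, h3.symm, h4.symm⟩
  have hZ : ∀ i i', (i, i') ∈ (invSet (x * w⁻¹)).image (Prod.map ⇑w⁻¹ ⇑w⁻¹) ↔
      (w i < w i' ∧ x i' < x i) := by
    intro i i'
    simp only [Finset.mem_image, Prod.exists, mem_invSet, Prod.map_apply, Prod.mk.injEq,
      Equiv.Perm.mul_apply]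
    constructor
    · rintro ⟨a, b, ⟨h1, h2⟩, rfl, rfl⟩
      simpa using ⟨h1, h2⟩
    · rintro ⟨h1, h2⟩
      exact ⟨w i, w i', by simpa using ⟨h1, h2⟩, by simp, by simp⟩
  have hunion : invSet x = (invSet y ∪ (invSet σ).image (Prod.map f f)) ∪
      (invSet (x * w⁻¹)).image (Prod.map ⇑w⁻¹ ⇑w⁻¹) := by
    ext ⟨i, i'⟩
    rw [Finset.mem_union, Finset.mem_union, hS, hZ, mem_invSet, mem_invSet]
    constructor
    · rintro ⟨h1, h2⟩
      by_cases hb : i ∈ Set.range f ∧ i' ∈ Set.range f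
      · obtain ⟨⟨s, rfl⟩, ⟨t, rfl⟩⟩ := hb
        exact Or.inl (Or.inr ⟨s, t, rfl, rfl, hf.lt_iff_lt.1 h1, (hpat _ _).1 h2⟩)
      · by_cases h3 : y i' < y i
        · exact Or.inl (Or.inl ⟨h1, h3⟩)
        · refine Or.inr ⟨(hcmp i i' hb).2 ?_, h2⟩
          exact lt_of_le_of_ne (not_lt.1 h3) fun h => h1.ne (y.injective h)
    · rintro ((⟨h1, h2⟩ | ⟨s, t, rfl, rfl, h1, h2⟩) | ⟨h1, h2⟩)
      · refine ⟨h1, ?_⟩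
        by_contra h3
        have h4 := lt_of_le_of_ne (not_lt.1 h3) fun h => h1.ne (x.injective h)
        exact lt_asymm h2 (hext i i' h1 h4)
      · exact ⟨hf h1, (hpat _ _).2 h2⟩
      · refine ⟨?_, h2⟩
        by_cases hb : i ∈ Set.range f ∧ i' ∈ Set.range f
        · obtain ⟨⟨s, rfl⟩, ⟨t, rfl⟩⟩ := hb
          exact absurd ((hwf _ _).1 h1) (lt_asymm ((hpat _ _).1 h2))
        · have h3 := (hcmp i i' hb).1 h1
          by_contra h4
          have h5 := lt_of_le_of_ne (not_lt.1 h4) fun h => h3.ne (by rw [h])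
          exact lt_asymm h3 (hext i' i h5 h2)
  have hd1 : Disjoint (invSet y) ((invSet σ).image (Prod.map f f)) := by
    rw [Finset.disjoint_left]
    rintro ⟨i, i'⟩ h1 h2
    obtain ⟨s, t, rfl, rfl, h3, -⟩ := (hS _ _).1 h2
    exact lt_asymm ((mem_invSet _ _ _).1 h1).2 ((hyf _ _).2 h3)
  have hd2 : Disjoint (invSet y ∪ (invSet σ).image (Prod.map f f))
      ((invSet (x * w⁻¹)).image (Prod.map ⇑w⁻¹ ⇑w⁻¹)) := by
    rw [Finset.disjoint_left]
    rintro ⟨i, i'⟩ h1 h2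
    obtain ⟨h3, h4⟩ := (hZ _ _).1 h2
    rcases Finset.mem_union.1 h1 with h1 | h1
    · have h5 := (mem_invSet _ _ _).1 h1
      by_cases hb : i ∈ Set.range f ∧ i' ∈ Set.range f
      · obtain ⟨⟨s, rfl⟩, ⟨t, rfl⟩⟩ := hb
        exact lt_asymm ((hwf _ _).1 h3) ((hpat _ _).1 h4)
      · exact lt_asymm h5.2 ((hcmp i i' hb).1 h3)
    · obtain ⟨s, t, rfl, rfl, -, h5⟩ := (hS _ _).1 h1
      exact lt_asymm h5 ((hwf _ _).1 h3)
  change (invSet x).card = (invSet y).card + (invSet σ).card + (invSet (x * w⁻¹)).card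
  rw [hunion, Finset.card_union_of_disjoint hd2, Finset.card_union_of_disjoint hd1,
    Finset.card_image_of_injective _ (hf.injective.prodMap hf.injective),
    Finset.card_image_of_injective _ ((w⁻¹).injective.prodMap (w⁻¹).injective)]

/-! ### Factorization from a convex occurrence -/

/-- An injective key on `Fin N` is the order type of a unique permutation: its rank function. -/
lemma exists_rank {N : ℕ} (key : Fin N → ℕ) (hkey : Function.Injective key) :
    ∃ y : Equiv.Perm (Fin N), (∀ i i', y i < y i' ↔ key i < key i') ∧
      ∀ i, (y i).val = (Finset.univ.filter fun i' => key i' < key i).card := by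
  have hm : StrictMono (key ∘ Tuple.sort key) :=
    (Tuple.monotone_sort key).strictMono_of_injective (hkey.comp (Tuple.sort key).injective)
  have h : ∀ i i', (Tuple.sort key)⁻¹ i < (Tuple.sort key)⁻¹ i' ↔ key i < key i' := by
    intro i i'
    rw [← hm.lt_iff_lt]
    simp
  refine ⟨(Tuple.sort key)⁻¹, h, fun i => ?_⟩
  simp only [← h]
  generalize (Tuple.sort key)⁻¹ = y
  rw [← Fin.card_Iio (y i), ← Finset.card_map y.symm.toEmbedding]
  congr 1
  ext i'
  simp

/-- A pattern occurrence that is convex for the order `i < i' ∧ x i < x i'` yields a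
factorization. -/
lemma factorizesOver_of_convex {N K : ℕ} (x : Equiv.Perm (Fin N)) (σ : Equiv.Perm (Fin K))
    (f : Fin K → Fin N) (hf : StrictMono f)
    (hpat : ∀ a b : Fin K, x (f a) < x (f b) ↔ σ a < σ b)
    (hconv : ∀ a b m, f a < m → m < f b → x (f a) < x m → x m < x (f b) → m ∈ Set.range f) :
    FactorizesOver x σ := by
  classical
  -- The positions outside the occurrence that lie below one of its points.
  let D : Fin N → Prop := fun m => m ∉ Set.range f ∧ ∃ b, m < f b ∧ x m < x (f b)
  have hDR : ∀ m, D m → m ∉ Set.range f := fun m h => h.1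
  -- The key lists `D` first, then the occurrence, then the rest, each by increasing position.
  let key : Fin N → ℕ := fun i =>
    if D i then i.val else if i ∈ Set.range f then N + i.val else 2 * N + i.val
  have hkD : ∀ i, D i → key i = i.val := fun i h => if_pos h
  have hkR : ∀ i, i ∈ Set.range f → key i = N + i.val := fun i h => by
    have : ¬ D i := fun h' => h'.1 h
    simp only [key, if_neg this, if_pos h]
  have hkO : ∀ i, ¬ D i → i ∉ Set.range f → key i = 2 * N + i.val := fun i h h' => by
    simp only [key, if_neg h, if_neg h']
  have hcase : ∀ i, D i ∧ key i = i.val ∨ i ∈ Set.range f ∧ key i = N + i.val ∨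
      (¬ D i ∧ i ∉ Set.range f) ∧ key i = 2 * N + i.val := by
    intro i
    by_cases h : D i
    · exact Or.inl ⟨h, hkD i h⟩
    · by_cases h' : i ∈ Set.range f
      · exact Or.inr (Or.inl ⟨h', hkR i h'⟩)
      · exact Or.inr (Or.inr ⟨⟨h, h'⟩, hkO i h h'⟩)
  clear_value key
  have hkey : Function.Injective key := by
    intro i i' h
    have h1 := i.isLt; have h2 := i'.isLt
    apply Fin.ext
    rcases hcase i with ⟨-, a⟩ | ⟨-, a⟩ | ⟨-, a⟩ <;>
      rcases hcase i' with ⟨-, b⟩ | ⟨-, b⟩ | ⟨-, b⟩ <;> omega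
  obtain ⟨y, hylt, hyval⟩ := exists_rank key hkey
  have hext : ∀ i i', i < i' → x i < x i' → y i < y i' := by
    intro i i' h1 h2
    rw [hylt]
    have h3 := i.isLt; have h4 := i'.isLt
    have h5 := Fin.lt_def.1 h1
    -- `D` is a lower set, by convexity.
    have hlow : D i' → D i := by
      rintro ⟨h, b, hb1, hb2⟩
      refine ⟨?_, b, h1.trans hb1, h2.trans hb2⟩
      rintro ⟨a, rfl⟩
      exact h (hconv a b i' h1 hb1 h2 hb2)
    have hlow' : i' ∈ Set.range f → D i ∨ i ∈ Set.range f := by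
      rintro ⟨b, rfl⟩
      by_cases h : i ∈ Set.range f
      · exact Or.inr h
      · exact Or.inl ⟨h, b, h1, h2⟩
    rcases hcase i with ⟨h, a⟩ | ⟨h, a⟩ | ⟨h, a⟩ <;>
      rcases hcase i' with ⟨h', b⟩ | ⟨h', b⟩ | ⟨h', b⟩ <;> try omega
    · exact absurd h (hlow h').1
    · exact absurd (hlow h') h.1
    · exact absurd (hlow' h') (not_or.2 h)
  obtain ⟨j, hjdef⟩ : ∃ j, j = (Finset.univ.filter D).card := ⟨_, rfl⟩
  have hy : ∀ t, (y (f t)).val = j + t.val := by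
    intro t
    rw [hyval, hjdef]
    have : (Finset.univ.filter fun i' => key i' < key (f t)) =
        Finset.univ.filter D ∪ (Finset.Iio t).image f := by
      ext i
      have h1 := i.isLt; have h2 := (f t).isLt
      simp only [Finset.mem_filter, Finset.mem_univ, true_and, Finset.mem_union,
        Finset.mem_image, Finset.mem_Iio]
      rw [hkR (f t) ⟨t, rfl⟩]
      rcases hcase i with ⟨h, a⟩ | ⟨⟨s, rfl⟩, a⟩ | ⟨h, a⟩
      · exact ⟨fun _ => Or.inl h, fun _ => by omega⟩
      · rw [a]
        constructor
        · intro h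
          exact Or.inr ⟨s, hf.lt_iff_lt.1 (Fin.lt_def.2 (by omega)), rfl⟩
        · rintro (h | ⟨s', h, h'⟩)
          · exact absurd ⟨s, rfl⟩ (hDR _ h)
          · have := Fin.lt_def.1 (hf h)
            rw [h'] at this
            omega
      · constructor
        · intro h'; omega
        · rintro (h' | ⟨s, -, rfl⟩)
          · exact absurd h' h.1
          · exact absurd ⟨s, rfl⟩ h.2
    rw [this, Finset.card_union_of_disjoint, Finset.card_image_of_injective _ hf.injective,
      Fin.card_Iio]
    rw [Finset.disjoint_left]
    intro i h h'
    obtain ⟨s, -, rfl⟩ := Finset.mem_image.1 h'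
    exact hDR _ (Finset.mem_filter.1 h).2 ⟨s, rfl⟩
  have hj : j + K ≤ N := by
    have h1 : (Finset.univ.filter D ∪ Finset.univ.image f).card ≤ N := by
      simpa using Finset.card_le_univ (Finset.univ.filter D ∪ Finset.univ.image f)
    rw [Finset.card_union_of_disjoint, Finset.card_image_of_injective _ hf.injective,
      ← hjdef] at h1
    · simpa using h1
    · rw [Finset.disjoint_left]
      intro i h h'
      obtain ⟨s, -, rfl⟩ := Finset.mem_image.1 h'
      exact hDR _ (Finset.mem_filter.1 h).2 ⟨s, rfl⟩
  let ι : Fin K ↪ Fin N := ⟨fun t => ⟨j + t.val, by have := t.isLt; omega⟩, fun s t h => by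
    simpa [Fin.ext_iff] using h⟩
  have hyι : ∀ t, y (f t) = ι t := fun t => Fin.ext (hy t)
  have hσι : ∀ t, σ.viaEmbedding ι (ι t) = ι (σ t) := σ.viaEmbedding_apply ι
  have hfix : ∀ m : Fin N, (m.val < j ∨ j + K ≤ m.val) → σ.viaEmbedding ι m = m := by
    intro m hm
    apply Equiv.Perm.viaEmbedding_apply_of_notMem
    rintro ⟨t, rfl⟩
    have h1 := t.isLt
    have h2 : (ι t).val = j + t.val := rfl
    omega
  have hout : ∀ i, i ∉ Set.range f → (y i).val < j ∨ j + K ≤ (y i).val := by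
    intro i hi
    by_contra h
    refine hi ⟨⟨(y i).val - j, by omega⟩, y.injective (Fin.ext ?_)⟩
    rw [hy]
    simp only
    omega
  have hwf : ∀ t, (σ.viaEmbedding ι * y) (f t) = ι (σ t) := fun t => by
    rw [Equiv.Perm.mul_apply, hyι, hσι]
  have hz : ∀ a, (x * (σ.viaEmbedding ι * y)⁻¹) (ι a) = x (f (σ⁻¹ a)) := by
    intro a
    have := hwf (σ⁻¹ a)
    rw [show σ (σ⁻¹ a) = a from σ.apply_symm_apply a] at this
    rw [← this]
    exact congrArg x (Equiv.symm_apply_apply _ _)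
  refine ⟨j, hj, σ.viaEmbedding ι, y, x * (σ.viaEmbedding ι * y)⁻¹, fun t => ?_, hfix,
    by group, ?_, fun a b hab => ?_, fun a b hab => ?_⟩
  · exact congrArg Fin.val (hσι t)
  · refine len_add x y _ σ f hf hpat j hy (fun t => ?_) (fun i hi => ?_) hout hext
    · exact congrArg Fin.val (hwf t)
    · exact hfix _ (hout i hi)
  · change y⁻¹ (ι a) < y⁻¹ (ι b)
    rw [← hyι, ← hyι]
    simpa using hf hab
  · change (x * (σ.viaEmbedding ι * y)⁻¹) (ι a) < (x * (σ.viaEmbedding ι * y)⁻¹) (ι b)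
    rw [hz, hz, hpat]
    simpa using hab

/-! ### Occurrence from a factorization -/

/-- The values of `x` on the positions `y⁻¹ (j + t)` form the pattern; additivity of the length is
not needed. -/
lemma contains_of_factorizesOver {N K : ℕ} (x : Equiv.Perm (Fin N)) (σ : Equiv.Perm (Fin K))
    (h : FactorizesOver x σ) : Contains x σ := by
  obtain ⟨j, hj, σ', y, z, h1, -, rfl, -, hy, hz⟩ := h
  refine ⟨fun t => y⁻¹ ⟨j + t.val, by have := t.isLt; omega⟩, fun a b hab => hy a b hab,
    fun a b => ?_⟩
  have hz' : StrictMono fun t : Fin K => z ⟨j + t.val, by have := t.isLt; omega⟩ :=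
    fun a b hab => hz a b hab
  have h2 : ∀ t : Fin K, σ' ⟨j + t.val, by have := t.isLt; omega⟩ =
      ⟨j + (σ t).val, by have := (σ t).isLt; omega⟩ := fun t => Fin.ext (h1 t)
  simp only [Equiv.Perm.mul_apply, Equiv.Perm.inv_def, Equiv.apply_symm_apply, h2]
  exact hz'.lt_iff_lt (a := σ a) (b := σ b)

/-! ### Convexity of minimal occurrences of [132] and [213] -/

/-- A nonempty predicate on triples of positions has an element minimizing a given measure. -/
lemma exists_min_triple {N : ℕ} (P : Fin N → Fin N → Fin N → Prop)
    (μ : Fin N → Fin N → Fin N → ℕ) (h : ∃ p q r, P p q r) :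
    ∃ p q r, P p q r ∧ ∀ p' q' r', P p' q' r' → μ p q r ≤ μ p' q' r' := by
  classical
  have hex : ∃ n p q r, P p q r ∧ μ p q r = n := by
    obtain ⟨p, q, r, h⟩ := h
    exact ⟨_, p, q, r, h, rfl⟩
  obtain ⟨p, q, r, h1, h2⟩ := Nat.find_spec hex
  exact ⟨p, q, r, h1, fun p' q' r' h' => h2 ▸ Nat.find_min' hex ⟨p', q', r', h', rfl⟩⟩

lemma strictMono_triple {N : ℕ} {p q r : Fin N} (h1 : p < q) (h2 : q < r) :
    StrictMono ![p, q, r] := by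
  intro a b hab
  have := h1.trans h2
  fin_cases a <;> fin_cases b <;> simp_all

lemma factorizesOver_p132 {N : ℕ} (x : Equiv.Perm (Fin N)) (h : Contains x p132) :
    FactorizesOver x p132 := by
  -- Replacing `p` by a larger position, or `q` or `r` by a smaller one, decreases the measure.
  obtain ⟨p, q, r, ⟨hpq, hqr, h1, h2⟩, hmin⟩ := exists_min_triple
    (fun p q r => p < q ∧ q < r ∧ x p < x r ∧ x r < x q)
    (fun p q r => (N - p.val) + q.val + r.val) (by
      obtain ⟨f, hf, hp⟩ := h
      exact ⟨f 0, f 1, f 2, hf (by decide), hf (by decide), (hp _ _).2 (by decide),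
        (hp _ _).2 (by decide)⟩)
  have h3 := h1.trans h2
  refine factorizesOver_of_convex x p132 ![p, q, r] (strictMono_triple hpq hqr) ?_ ?_
  · intro a b
    fin_cases a <;> fin_cases b <;> simp [p132, h1, h2, h3, h1.le, h2.le, h3.le]
  · intro a b m hm1 hm2 hm3 hm4
    by_contra hm
    have hmp : m ≠ p := fun e => hm ⟨0, e.symm⟩
    have hmq : m ≠ q := fun e => hm ⟨1, e.symm⟩
    have hmr : m ≠ r := fun e => hm ⟨2, e.symm⟩
    have hxq : x m ≠ x q := fun e => hmq (x.injective e)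
    have hxr : x m ≠ x r := fun e => hmr (x.injective e)
    have t1 := hmin m q r
    have t2 := hmin p m r
    have t3 := hmin p q m
    fin_cases a <;> fin_cases b <;> simp at hm1 hm2 hm3 hm4 <;> omega

lemma factorizesOver_p213 {N : ℕ} (x : Equiv.Perm (Fin N)) (h : Contains x p213) :
    FactorizesOver x p213 := by
  -- Replacing `p` or `q` by a larger position, or `r` by a smaller one, decreases the measure.
  obtain ⟨p, q, r, ⟨hpq, hqr, h1, h2⟩, hmin⟩ := exists_min_triple
    (fun p q r => p < q ∧ q < r ∧ x q < x p ∧ x p < x r)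
    (fun p q r => (N - p.val) + (N - q.val) + r.val) (by
      obtain ⟨f, hf, hp⟩ := h
      exact ⟨f 0, f 1, f 2, hf (by decide), hf (by decide), (hp _ _).2 (by decide),
        (hp _ _).2 (by decide)⟩)
  have h3 := h1.trans h2
  refine factorizesOver_of_convex x p213 ![p, q, r] (strictMono_triple hpq hqr) ?_ ?_
  · intro a b
    fin_cases a <;> fin_cases b <;> simp [p213, h1, h2, h3, h1.le, h2.le, h3.le]
  · intro a b m hm1 hm2 hm3 hm4
    by_contra hm
    have hmp : m ≠ p := fun e => hm ⟨0, e.symm⟩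
    have hmq : m ≠ q := fun e => hm ⟨1, e.symm⟩
    have hmr : m ≠ r := fun e => hm ⟨2, e.symm⟩
    have hxp : x m ≠ x p := fun e => hmp (x.injective e)
    have hxq : x m ≠ x q := fun e => hmq (x.injective e)
    have t1 := hmin m q r
    have t2 := hmin p m r
    have t3 := hmin p q m
    fin_cases a <;> fin_cases b <;> simp at hm1 hm2 hm3 hm4 <;> omega

theorem stmt3 (N : ℕ) (hN : 1 ≤ N) (x : Equiv.Perm (Fin N))
    (σ : Equiv.Perm (Fin 3)) (hσ : σ = p132 ∨ σ = p213) :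
    Contains x σ ↔ FactorizesOver x σ := by
  refine ⟨fun h => ?_, contains_of_factorizesOver x σ⟩
  rcases hσ with rfl | rfl
  · exact factorizesOver_p132 x h
  · exact factorizesOver_p213 x h
end

section
/- Let N ≥ 1 and x ∈ S_N. Then there is exactly one permutation y ∈ S_N that avoids the pattern [231] and satisfies Q(y) = Q(x); moreover this y has maximal length in its fiber, i.e. ℓ(y) ≥ ℓ(x') for every x' ∈ S_N with Q(x') = Q(x). -/
/-- `Q(x)(i) = min { x(j) : i ≤ j }`. -/
def Qmap {N : ℕ} (x : Equiv.Perm (Fin N)) : Fin N → Fin N := fun i =>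
  ((Finset.univ.filter fun j => i ≤ j).image x).min'
    ⟨x i, Finset.mem_image_of_mem x (by simp)⟩

/-!
Two facts about a fiber of `Qmap` carry the proof.

* It holds at most one permutation avoiding [231] (`eq_of_avoids`). Reading positions from right to
  left, such a permutation must take at each `i` the least unused value that is at least
  `Qmap x i`: if `y` and `z` agree to the right of `i` and `y i < z i`, then `z` takes the value
  `y i` somewhere to the left of `i` and a value below `y i` to the right of `i`, so `z` contains
  [231].
* If `x` contains [231] at `i < j < k`, exchanging the values at `i` and `j` keeps `Qmap`
  (`Qmap_mul_swap`), because `x k` is smaller than both, and increases the length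
  (`len_lt_len_mul_swap`). So an element of maximal length in the fiber avoids [231].

Hence an element of maximal length exists, avoids [231], and is the only element avoiding [231].
-/

theorem contains_p231_iff {N : ℕ} (x : Equiv.Perm (Fin N)) :
    Contains x p231 ↔ ∃ i j k, i < j ∧ j < k ∧ x k < x i ∧ x i < x j := by
  constructor
  · rintro ⟨f, hf, h⟩
    exact ⟨f 0, f 1, f 2, hf (by decide), hf (by decide), (h 2 0).2 (by decide),
      (h 0 1).2 (by decide)⟩
  · rintro ⟨i, j, k, hij, hjk, hki, hxij⟩
    refine ⟨![i, j, k], ?_, ?_⟩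
    · intro a b hab
      fin_cases a <;> fin_cases b <;> simp at hab ⊢ <;> order
    · intro a b
      fin_cases a <;> fin_cases b <;> simp [p231] <;> order

theorem lt_Qmap_iff {N : ℕ} (x : Equiv.Perm (Fin N)) (i c : Fin N) :
    c < Qmap x i ↔ ∀ j, i ≤ j → c < x j := by
  refine (Finset.lt_min'_iff _ _).trans ?_
  simp

theorem Qmap_eq_of_lt_iff {N : ℕ} {x y : Equiv.Perm (Fin N)}
    (h : ∀ i c, (∀ j, i ≤ j → c < x j) ↔ (∀ j, i ≤ j → c < y j)) : Qmap x = Qmap y := by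
  funext i
  refine eq_of_forall_lt_iff fun c => ?_
  rw [lt_Qmap_iff, lt_Qmap_iff, h]

/-- If `y` and `z` agree to the right of `i` and have the same `Qmap`, then a strict inequality at
`i` forces the pattern [231] in the larger one. -/
theorem not_lt_of_avoids {N : ℕ} {y z : Equiv.Perm (Fin N)} (hz : ¬ Contains z p231)
    (hQ : Qmap y = Qmap z) {i : Fin N} (hi : ∀ k, i < k → y k = z k) : ¬ y i < z i := by
  intro hlt
  obtain ⟨j, hj⟩ := z.surjective (y i)
  have hji : j < i := by
    rcases lt_trichotomy j i with h | h | h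
    · exact h
    · subst h; exact absurd hj hlt.ne'
    · exact absurd (y.injective ((hi j h).trans hj)) h.ne'
  have hnot : ¬ y i < Qmap z i := by
    rw [← hQ, lt_Qmap_iff]
    exact fun h => lt_irrefl _ (h i le_rfl)
  rw [lt_Qmap_iff] at hnot
  push Not at hnot
  obtain ⟨k, hik, hk⟩ := hnot
  have hik' : i < k := lt_of_le_of_ne hik (by rintro rfl; exact absurd hlt hk.not_gt)
  have hk' : z k < y i :=
    lt_of_le_of_ne hk fun h => hik'.ne' (y.injective ((hi k hik').trans h))
  exact hz ((contains_p231_iff z).2 ⟨j, i, k, hji, hik', hj ▸ hk', hj ▸ hlt⟩)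

theorem eq_of_avoids {N : ℕ} {y z : Equiv.Perm (Fin N)} (hy : ¬ Contains y p231)
    (hz : ¬ Contains z p231) (hQ : Qmap y = Qmap z) : y = z := by
  ext1 i
  induction i using WellFoundedGT.induction with
  | ind i ih =>
    exact le_antisymm (not_lt.1 (not_lt_of_avoids hy hQ.symm fun k hk => (ih k hk).symm))
      (not_lt.1 (not_lt_of_avoids hz hQ ih))

theorem Qmap_mul_swap {N : ℕ} {x : Equiv.Perm (Fin N)} {i j k : Fin N} (hij : i < j)
    (hjk : j < k) (hki : x k < x i) (hx : x i < x j) :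
    Qmap (x * Equiv.swap i j) = Qmap x := by
  have hk : Equiv.swap i j k = k := Equiv.swap_apply_of_ne_of_ne (by order) (by order)
  refine Qmap_eq_of_lt_iff fun a c => ⟨fun h b hab => ?_, fun h b hab => ?_⟩
  · have hb := h b hab
    have hk' := h k
    have hj' := h j
    simp only [Equiv.Perm.mul_apply, hk, Equiv.swap_apply_right] at hb hk' hj'
    rcases eq_or_ne b i with rfl | hbi
    · exact hj' (by order)
    rcases eq_or_ne b j with rfl | hbj
    · exact (hj' hab).trans hx
    rwa [Equiv.swap_apply_of_ne_of_ne hbi hbj] at hb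
  · rw [Equiv.Perm.mul_apply]
    rcases eq_or_ne b i with rfl | hbi
    · rw [Equiv.swap_apply_left]
      exact h j (by order)
    rcases eq_or_ne b j with rfl | hbj
    · rw [Equiv.swap_apply_right]
      exact (h k (by order)).trans hki
    rw [Equiv.swap_apply_of_ne_of_ne hbi hbj]
    exact h b hab

/-- With `τ = swap i j`, the inversions `(a, b)` of `x` inject into those of `x * τ` other than
`(i, j)`, by `(τ a, τ b)` if this pair is increasing and by `(a, b)` otherwise. -/
theorem len_lt_len_mul_swap {N : ℕ} {x : Equiv.Perm (Fin N)} {i j : Fin N} (hij : i < j)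
    (hx : x i < x j) : len x < len (x * Equiv.swap i j) := by
  set τ := Equiv.swap i j with hτ
  have hττ : ∀ a, τ (τ a) = a := fun a => Equiv.swap_apply_self i j a
  have hτi : τ i = j := Equiv.swap_apply_left i j
  have hτj : τ j = i := Equiv.swap_apply_right i j
  have hτn : ∀ a, a ≠ i → a ≠ j → τ a = a := fun a => Equiv.swap_apply_of_ne_of_ne
  let g : Fin N × Fin N → Fin N × Fin N := fun p => if τ p.1 < τ p.2 then (τ p.1, τ p.2) else p
  unfold len
  rw [← Finset.card_image_of_injOn (f := g)]
  · apply Finset.card_lt_card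
    rw [Finset.ssubset_iff_of_subset]
    · refine ⟨(i, j), Finset.mem_filter.2 ⟨Finset.mem_univ _, by simp [hτi, hτj, hij, hx]⟩, ?_⟩
      simp only [Finset.mem_image, Finset.mem_filter, Finset.mem_univ, true_and, Prod.exists,
        not_exists, not_and, and_imp, g]
      intro a b hab hinv heq
      split_ifs at heq with h
      · obtain ⟨h1, h2⟩ := Prod.mk.inj heq
        have ha := hττ a
        have hb := hττ b
        rw [h1, hτi] at ha
        rw [h2, hτj] at hb
        order
      · obtain ⟨rfl, rfl⟩ := Prod.mk.inj heq
        order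
    · intro p hp
      simp only [Finset.mem_image, Finset.mem_filter, Finset.mem_univ, true_and, Prod.exists,
        g] at hp
      obtain ⟨a, b, ⟨hab, hinv⟩, rfl⟩ := hp
      refine Finset.mem_filter.2 ⟨Finset.mem_univ _, ?_⟩
      simp only [Equiv.Perm.mul_apply]
      split_ifs with h
      · exact ⟨h, by simpa only [hττ] using hinv⟩
      · refine ⟨hab, ?_⟩
        -- Since `τ` reverses `a < b`, either `a = i` and `b ≤ j`, or `b = j` and `i ≤ a`.
        dsimp only at h ⊢
        rcases eq_or_ne a i with rfl | hai
        · rcases eq_or_ne b j with rfl | hbj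
          · order
          · rw [hτi, hτn b (by order) hbj]
            order
        · rcases eq_or_ne b j with rfl | hbj
          · rw [hτj, hτn a hai (by order)]
            order
          · rcases eq_or_ne a j with rfl | haj
            · rw [hτj, hτn b (by order) (by order)] at h
              order
            · rcases eq_or_ne b i with rfl | hbi
              · rw [hτi, hτn a hai haj] at h
                order
              · rw [hτn a hai haj, hτn b hbi hbj] at h
                order
  · rintro ⟨a, b⟩ hp ⟨c, d⟩ hq heq
    simp only [Finset.coe_filter, Finset.mem_univ, true_and, Set.mem_ofPred_eq] at hp hq
    simp only [g] at heq
    split_ifs at heq with h1 h2 h2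
    · obtain ⟨e1, e2⟩ := Prod.mk.inj heq
      rw [τ.injective e1, τ.injective e2]
    · obtain ⟨e1, e2⟩ := Prod.mk.inj heq
      rw [← e1, ← e2, hττ, hττ] at h2
      exact absurd hp.1 h2
    · obtain ⟨e1, e2⟩ := Prod.mk.inj heq
      rw [e1, e2, hττ, hττ] at h1
      exact absurd hq.1 h1
    · exact heq

theorem stmt8 (N : ℕ) (hN : 1 ≤ N) (x : Equiv.Perm (Fin N)) :
    (∃! y : Equiv.Perm (Fin N), ¬ Contains y p231 ∧ Qmap y = Qmap x) ∧
    (∀ y : Equiv.Perm (Fin N), ¬ Contains y p231 → Qmap y = Qmap x →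
      ∀ x' : Equiv.Perm (Fin N), Qmap x' = Qmap x → len x' ≤ len y) := by
  obtain ⟨m, hm, hmax⟩ := Finset.exists_max_image
    (Finset.univ.filter fun y : Equiv.Perm (Fin N) => Qmap y = Qmap x) len ⟨x, by simp⟩
  simp only [Finset.mem_filter, Finset.mem_univ, true_and] at hm hmax
  have hav : ¬ Contains m p231 := by
    rw [contains_p231_iff]
    rintro ⟨i, j, k, hij, hjk, hki, hx⟩
    exact absurd (hmax _ ((Qmap_mul_swap hij hjk hki hx).trans hm))
      (len_lt_len_mul_swap hij hx).not_ge
  refine ⟨⟨m, ⟨hav, hm⟩, fun y hy => eq_of_avoids hy.1 hav (hy.2.trans hm.symm)⟩, ?_⟩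
  intro y hy hQ x' hx'
  rw [eq_of_avoids hy hav (hQ.trans hm.symm)]
  exact hmax x' hx'
end

section
/- Let N ≥ 1 and x ∈ S_N. Then there is exactly one permutation y ∈ S_N that avoids the pattern [321] and satisfies R(y) = R(x), and this y satisfies ℓ(y) ≤ ℓ(x') for every x' ∈ S_N with R(x') = R(x); and there is exactly one permutation z ∈ S_N that avoids the pattern [312] and satisfies R(z) = R(x), and this z satisfies ℓ(z) ≥ ℓ(x') for every x' ∈ S_N with R(x') = R(x). -/
/-- `R(x) = Q(w₀ ∘ x ∘ w₀)`, where `w₀` is the longest element. -/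
def Rmap {N : ℕ} (x : Equiv.Perm (Fin N)) : Fin N → Fin N :=
  Qmap (Fin.revPerm * x * Fin.revPerm)

/-- The pattern [321]. -/
def p321 : Equiv.Perm (Fin 3) := ⟨![2, 1, 0], ![2, 1, 0], by decide, by decide⟩

/-- The pattern [312]. -/
def p312 : Equiv.Perm (Fin 3) := ⟨![2, 0, 1], ![1, 2, 0], by decide, by decide⟩

theorem le_Rmap_rev_iff {N : ℕ} (x : Equiv.Perm (Fin N)) (i v : Fin N) :
    v.rev ≤ Rmap x i.rev ↔ ∀ k ≤ i, x k ≤ v := by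
  unfold Rmap Qmap
  refine (Finset.le_min'_iff _ _).trans ?_
  simp only [Finset.mem_image, Finset.mem_filter, Finset.mem_univ, true_and,
    forall_exists_index, and_imp, forall_apply_eq_imp_iff₂, Equiv.Perm.mul_apply,
    Fin.revPerm_apply, Fin.rev_le_rev]
  constructor
  · intro h k hk
    simpa using h k.rev (Fin.rev_le_rev.2 hk)
  · intro h k hk
    exact h _ (by rwa [Fin.rev_le_iff])

/-- `Rmap` records exactly the running maxima. -/
theorem Rmap_eq_iff {N : ℕ} (x y : Equiv.Perm (Fin N)) :
    Rmap x = Rmap y ↔ ∀ i v : Fin N, (∀ k ≤ i, x k ≤ v) ↔ (∀ k ≤ i, y k ≤ v) := by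
  constructor
  · intro h i v
    rw [← le_Rmap_rev_iff, ← le_Rmap_rev_iff, h]
  · intro h
    funext i
    refine eq_of_forall_le_iff fun v => ?_
    have := h i.rev v.rev
    rwa [← le_Rmap_rev_iff, ← le_Rmap_rev_iff, Fin.rev_rev, Fin.rev_rev] at this

theorem contains_p321_iff {N : ℕ} (x : Equiv.Perm (Fin N)) :
    Contains x p321 ↔ ∃ i j k, i < j ∧ j < k ∧ x j < x i ∧ x k < x j := by
  constructor
  · rintro ⟨f, hf, h⟩
    exact ⟨f 0, f 1, f 2, hf (by decide), hf (by decide), (h 1 0).2 (by decide),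
      (h 2 1).2 (by decide)⟩
  · rintro ⟨i, j, k, hij, hjk, h1, h2⟩
    refine ⟨![i, j, k], ?_, ?_⟩
    · intro a b hab
      fin_cases a <;> fin_cases b <;> simp at hab ⊢ <;> order
    · intro a b
      fin_cases a <;> fin_cases b <;> simp [p321] <;> order

theorem contains_p312_iff {N : ℕ} (x : Equiv.Perm (Fin N)) :
    Contains x p312 ↔ ∃ i j k, i < j ∧ j < k ∧ x k < x i ∧ x j < x k := by
  constructor
  · rintro ⟨f, hf, h⟩
    exact ⟨f 0, f 1, f 2, hf (by decide), hf (by decide), (h 2 0).2 (by decide),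
      (h 1 2).2 (by decide)⟩
  · rintro ⟨i, j, k, hij, hjk, h1, h2⟩
    refine ⟨![i, j, k], ?_, ?_⟩
    · intro a b hab
      fin_cases a <;> fin_cases b <;> simp at hab ⊢ <;> order
    · intro a b
      fin_cases a <;> fin_cases b <;> simp [p312] <;> order

/-- Exchanging a non-inverted pair of values strictly increases the length: with `s = swap j k`,
the map sending `(a, b)` to `(s a, s b)` when `s a < s b` and to `(a, b)` otherwise embeds the
inversions of `x` into those of `x * s`, and misses `(j, k)`. -/
theorem len_lt_mul_swap {N : ℕ} (x : Equiv.Perm (Fin N)) {j k : Fin N} (hjk : j < k)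
    (h : x j < x k) : len x < len (x * Equiv.swap j k) := by
  unfold len
  set s := Equiv.swap j k with hs
  have hss : ∀ a, s (s a) = a := fun a => Equiv.swap_apply_self j k a
  let f : Fin N × Fin N → Fin N × Fin N := fun p =>
    if s p.1 < s p.2 then (s p.1, s p.2) else p
  set A := Finset.univ.filter fun p : Fin N × Fin N => p.1 < p.2 ∧ x p.2 < x p.1 with hA
  have hinj : Set.InjOn f A := by
    rintro ⟨a, b⟩ hab ⟨c, d⟩ hcd he
    simp only [hA, Finset.coe_filter, Finset.mem_univ, true_and, Set.mem_ofPred_eq] at hab hcd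
    simp only [f] at he
    have e1 := hss a
    have e2 := hss b
    have e3 := hss c
    have e4 := hss d
    split_ifs at he with h1 h2 h2
    · rw [Prod.mk.injEq] at he
      rw [← e1, ← e2, he.1, he.2, e3, e4]
    · rw [Prod.mk.injEq] at he
      rw [← he.1, ← he.2, e1, e2] at h2
      exact absurd hab.1 h2
    · rw [Prod.mk.injEq] at he
      rw [he.1, he.2, e3, e4] at h1
      exact absurd hcd.1 h1
    · exact he
  rw [← Finset.card_image_of_injOn hinj]
  apply Finset.card_lt_card
  rw [Finset.ssubset_iff_of_subset]
  · refine ⟨(j, k), by simp [hs, hjk, h], ?_⟩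
    simp only [Finset.mem_image, not_exists, not_and]
    rintro ⟨a, b⟩ hab he
    simp only [hA, Finset.mem_filter, Finset.mem_univ, true_and] at hab
    simp only [f] at he
    split_ifs at he with h1
    · rw [Prod.mk.injEq] at he
      have ea : a = k := by rw [← hss a, he.1, hs, Equiv.swap_apply_left]
      have eb : b = j := by rw [← hss b, he.2, hs, Equiv.swap_apply_right]
      subst ea eb
      exact absurd hab.1 hjk.not_gt
    · rw [Prod.mk.injEq] at he
      rw [he.1, he.2] at hab
      exact absurd hab.2 h.not_gt
  · intro q hq
    obtain ⟨⟨a, b⟩, hab, rfl⟩ := Finset.mem_image.1 hq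
    simp only [hA, Finset.mem_filter, Finset.mem_univ, true_and] at hab
    refine Finset.mem_filter.2 ⟨Finset.mem_univ _, ?_⟩
    simp only [f, Equiv.Perm.mul_apply]
    split_ifs with h1
    · simp only [hss]
      exact ⟨h1, hab.2⟩
    · refine ⟨hab.1, ?_⟩
      obtain ⟨h2, h3⟩ := hab
      simp only [hs, Equiv.swap_apply_def] at h1 ⊢
      split_ifs at h1 ⊢ <;> subst_vars <;> order

theorem Rmap_mul_swap {N : ℕ} (x : Equiv.Perm (Fin N)) {i j k : Fin N} (hij : i < j)
    (hjk : j < k) (h1 : x j < x i) (h2 : x k < x i) :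
    Rmap (x * Equiv.swap j k) = Rmap x := by
  rw [Rmap_eq_iff]
  intro m v
  have hi : Equiv.swap j k i = i :=
    Equiv.swap_apply_of_ne_of_ne hij.ne (hij.trans hjk).ne
  simp only [Equiv.Perm.mul_apply]
  constructor
  all_goals
    intro h l hl
    have h3 := h l hl
    have h4 := h i
    rw [Equiv.swap_apply_def] at *
    split_ifs at * <;> subst_vars <;> first
      | assumption
      | (have := h4 (by order); order)

/-- Distinct permutations with the same running maxima: one of them contains a `[321]`, and one of
them contains a `[312]`. -/
theorem exists_patterns_of_ne {N : ℕ} {y z : Equiv.Perm (Fin N)} (hR : Rmap y = Rmap z)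
    (hne : y ≠ z) :
    (Contains y p321 ∨ Contains z p321) ∧ (Contains y p312 ∨ Contains z p312) := by
  obtain ⟨i, hi, hmin⟩ : ∃ i, y i ≠ z i ∧ ∀ k < i, y k = z k := by
    obtain ⟨i, hi, hmin⟩ := WellFounded.has_min (wellFounded_lt (α := Fin N)) {i | y i ≠ z i}
      (by
        by_contra hc
        exact hne (Equiv.ext fun a => by_contra fun ha => hc ⟨a, ha⟩))
    exact ⟨i, hi, fun k hk => by_contra fun hc => hmin k hc hk⟩
  wlog hlt : y i < z i generalizing y z
  · have := this hR.symm hne.symm hi.symm (fun k hk => (hmin k hk).symm)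
      (lt_of_le_of_ne (not_lt.1 hlt) hi.symm)
    tauto
  obtain ⟨p, hp, hpz⟩ : ∃ p < i, z i < z p := by
    by_contra hc
    push Not at hc
    -- Otherwise `z i` is a strict running maximum of `z`, which `y` does not reach by time `i`.
    have hy : ∀ k ≤ i, y k ≤ z i := by
      intro k hk
      rcases hk.lt_or_eq with hk | rfl
      · rw [hmin k hk]
        exact hc k hk
      · exact hlt.le
    have hylt : ∀ k ≤ i, y k < z i := by
      intro k hk
      refine lt_of_le_of_ne (hy k hk) fun he => ?_
      rcases hk.lt_or_eq with hk | rfl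
      · rw [hmin k hk] at he
        exact hk.ne (z.injective he)
      · exact hi he
    obtain ⟨q, hq, hqmax⟩ := Finset.exists_max_image (Finset.Iic i) y ⟨i, by simp⟩
    have hq' := hylt q (by simpa using hq)
    have := ((Rmap_eq_iff y z).1 hR i (y q)).1 (fun k hk => hqmax k (by simpa using hk)) i le_rfl
    exact absurd hq' this.not_gt
  have after : ∀ k, z k = y i → i < k := by
    intro k hk
    rcases lt_trichotomy i k with h | rfl | h
    · exact h
    · exact absurd hk.symm hi
    · rw [← hmin k h] at hk
      exact absurd (y.injective hk) h.ne
  have after' : ∀ k, y k = z i → i < k := by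
    intro k hk
    rcases lt_trichotomy i k with h | rfl | h
    · exact h
    · exact absurd hk hi
    · rw [hmin k h] at hk
      exact absurd (z.injective hk) h.ne
  constructor
  · right
    have hk : z (z.symm (y i)) = y i := z.apply_symm_apply _
    exact (contains_p321_iff z).2 ⟨p, i, _, hp, after _ hk, hpz, by rwa [hk]⟩
  · left
    have hk : y (y.symm (z i)) = z i := y.apply_symm_apply _
    exact (contains_p312_iff y).2 ⟨p, i, _, hp, after' _ hk, by rwa [hk, hmin p hp], by rwa [hk]⟩

theorem not_contains_p321_of_minimal {N : ℕ} {y : Equiv.Perm (Fin N)}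
    (h : ∀ x', Rmap x' = Rmap y → len y ≤ len x') : ¬ Contains y p321 := by
  rw [contains_p321_iff]
  rintro ⟨i, j, k, hij, hjk, h1, h2⟩
  have hlt := len_lt_mul_swap (y * Equiv.swap j k) hjk (by simpa using h2)
  rw [mul_assoc, Equiv.swap_mul_self, mul_one] at hlt
  exact absurd hlt (h _ (Rmap_mul_swap y hij hjk h1 (h2.trans h1))).not_gt

theorem not_contains_p312_of_maximal {N : ℕ} {z : Equiv.Perm (Fin N)}
    (h : ∀ x', Rmap x' = Rmap z → len x' ≤ len z) : ¬ Contains z p312 := by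
  rw [contains_p312_iff]
  rintro ⟨i, j, k, hij, hjk, h1, h2⟩
  exact absurd (len_lt_mul_swap z hjk h2)
    (h _ (Rmap_mul_swap z hij hjk (h2.trans h1) h1)).not_gt

theorem stmt9 (N : ℕ) (hN : 1 ≤ N) (x : Equiv.Perm (Fin N)) :
    ((∃! y : Equiv.Perm (Fin N), ¬ Contains y p321 ∧ Rmap y = Rmap x) ∧
      (∀ y : Equiv.Perm (Fin N), ¬ Contains y p321 → Rmap y = Rmap x →
        ∀ x' : Equiv.Perm (Fin N), Rmap x' = Rmap x → len y ≤ len x')) ∧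
    ((∃! z : Equiv.Perm (Fin N), ¬ Contains z p312 ∧ Rmap z = Rmap x) ∧
      (∀ z : Equiv.Perm (Fin N), ¬ Contains z p312 → Rmap z = Rmap x →
        ∀ x' : Equiv.Perm (Fin N), Rmap x' = Rmap x → len x' ≤ len z)) := by
  have u321 : ∀ y z : Equiv.Perm (Fin N), ¬ Contains y p321 → ¬ Contains z p321 →
      Rmap y = Rmap z → y = z := fun y z hy hz hR => by_contra fun hne =>
    (exists_patterns_of_ne hR hne).1.elim hy hz
  have u312 : ∀ y z : Equiv.Perm (Fin N), ¬ Contains y p312 → ¬ Contains z p312 →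
      Rmap y = Rmap z → y = z := fun y z hy hz hR => by_contra fun hne =>
    (exists_patterns_of_ne hR hne).2.elim hy hz
  have hfin : (Set.Finite {x' : Equiv.Perm (Fin N) | Rmap x' = Rmap x}) := Set.toFinite _
  obtain ⟨y, hy, hymin⟩ := Set.exists_min_image _ len hfin ⟨x, rfl⟩
  obtain ⟨z, hz, hzmax⟩ := Set.exists_max_image _ len hfin ⟨x, rfl⟩
  simp only [Set.mem_ofPred_eq] at hy hz hymin hzmax
  have hyav : ¬ Contains y p321 :=
    not_contains_p321_of_minimal fun x' h => hymin x' (h.trans hy)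
  have hzav : ¬ Contains z p312 :=
    not_contains_p312_of_maximal fun x' h => hzmax x' (h.trans hz)
  refine ⟨⟨⟨y, ⟨hyav, hy⟩, fun w hw => u321 w y hw.1 hyav (hw.2.trans hy.symm)⟩, ?_⟩,
    ⟨⟨z, ⟨hzav, hz⟩, fun w hw => u312 w z hw.1 hzav (hw.2.trans hz.symm)⟩, ?_⟩⟩
  · intro w hw hwR
    rw [u321 w y hw hyav (hwR.trans hy.symm)]
    exact hymin
  · intro w hw hwR
    rw [u312 w z hw hzav (hwR.trans hz.symm)]
    exact hzmax
end
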